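/- arXiv:1510.08118 — 2 statements merged into one kernel-verified Lean document; each statement's English description precedes it below -/
import Mathlib

section
/- Let p ≥ 1, set n = 2p, let Λ be a full-rank lattice in ℝⁿ and let α, α', β, β' > 0 be reals. Then Spec(Λ,α,β,p) = Spec(Λ,α',β',p) (as functions ℝ → ℕ) if and only if {α, β} = {α', β'} as unordered pairs. -/
open Real
open scoped RealInnerProductSpace

/-- The dual lattice `Λ* = {v : ∀ w ∈ Λ, ⟨v,w⟩ ∈ ℤ}` of a lattice `Λ ⊆ ℝⁿ`. -/
def dualLattice {n : ℕ} (L : Submodule ℤ (EuclideanSpace ℝ (Fin n))) :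
    Set (EuclideanSpace ℝ (Fin n)) :=
  {v | ∀ w ∈ L, ∃ m : ℤ, ⟪v, w⟫ = (m : ℝ)}

/-- The spectrum, with multiplicities, of the generalized Hodge-Laplace operator
`F_{αβ} = α dδ + β δd` on `p`-forms on the flat torus `ℝⁿ/Λ` (Theorem 3.9):
`x ↦ C(n-1,p-1)·#{l ∈ Λ* : 4π²α‖l‖² = x} + C(n-1,p)·#{l ∈ Λ* : 4π²β‖l‖² = x}`. -/
noncomputable def torusSpec {n : ℕ} (L : Submodule ℤ (EuclideanSpace ℝ (Fin n)))
    (α β : ℝ) (p : ℕ) : ℝ → ℕ := fun x =>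
  (n - 1).choose (p - 1) *
      Nat.card {l : EuclideanSpace ℝ (Fin n) //
        l ∈ dualLattice L ∧ 4 * π ^ 2 * α * ‖l‖ ^ 2 = x} +
    (n - 1).choose p *
      Nat.card {l : EuclideanSpace ℝ (Fin n) //
        l ∈ dualLattice L ∧ 4 * π ^ 2 * β * ‖l‖ ^ 2 = x}

theorem dual_finite {n : ℕ} (L : Submodule ℤ (EuclideanSpace ℝ (Fin n)))
    [DiscreteTopology L] [IsZLattice ℝ L] (R : ℝ) :
    {l | l ∈ dualLattice L ∧ ‖l‖ ≤ R}.Finite := by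
  classical
  let b0 := Module.Free.chooseBasis ℤ L
  let b := b0.ofZLatticeBasis ℝ L
  have hb : ∀ i, b i ∈ L := fun i => by
    simp [b, Module.Basis.ofZLatticeBasis_apply]
  let F : EuclideanSpace ℝ (Fin n) → (Module.Free.ChooseBasisIndex ℤ L → ℤ) :=
    fun l i => round (⟪l, b i⟫ : ℝ)
  have hF : ∀ l ∈ dualLattice L, ∀ i, ((F l i : ℤ) : ℝ) = ⟪l, b i⟫ := by
    intro l hl i
    obtain ⟨m, hm⟩ := hl (b i) (hb i)
    simp only [F, hm, round_intCast]
  have hfin : (Set.univ.pi (fun i : Module.Free.ChooseBasisIndex ℤ L =>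
      Set.Icc (-⌈R * ‖b i‖⌉) ⌈R * ‖b i‖⌉)).Finite :=
    Set.Finite.pi' (fun i => Set.finite_Icc _ _) |>.subset (by intro x hx i; exact hx i trivial)
  refine Set.Finite.of_finite_image (f := F) (hfin.subset ?_) ?_
  · rintro _ ⟨l, ⟨hl, hR⟩, rfl⟩ i -
    have h1 : |(⟪l, b i⟫ : ℝ)| ≤ R * ‖b i‖ :=
      (abs_real_inner_le_norm l (b i)).trans (by gcongr)
    rw [← hF l hl i] at h1
    have h2 := h1.trans (Int.le_ceil _)
    rw [abs_le] at h2
    exact ⟨by exact_mod_cast h2.1, by exact_mod_cast h2.2⟩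
  · rintro l ⟨hl, -⟩ l' ⟨hl', -⟩ h
    refine InnerProductSpace.ext_inner_right_basis (𝕜 := ℝ) b fun i => ?_
    rw [← hF l hl i, ← hF l' hl' i, h]

theorem dual_exists {n : ℕ} (hn : 0 < n) (L : Submodule ℤ (EuclideanSpace ℝ (Fin n)))
    [DiscreteTopology L] [IsZLattice ℝ L] :
    ∃ l ∈ dualLattice L, l ≠ 0 := by
  classical
  let b0 := Module.Free.chooseBasis ℤ L
  let b := b0.ofZLatticeBasis ℝ L
  have : Nonempty (Module.Free.ChooseBasisIndex ℤ L) := by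
    have : Nonempty (Fin n) := ⟨⟨0, hn⟩⟩
    have : Nontrivial (EuclideanSpace ℝ (Fin n)) := inferInstance
    exact b.index_nonempty
  obtain ⟨i⟩ := this
  let v := (InnerProductSpace.toDual ℝ (EuclideanSpace ℝ (Fin n))).symm
    (LinearMap.toContinuousLinearMap (b.coord i))
  have hv : ∀ w, (⟪v, w⟫ : ℝ) = b.coord i w := by
    intro w
    simp [v]
  refine ⟨v, ?_, ?_⟩
  · intro w hw
    refine ⟨b0.repr ⟨w, hw⟩ i, ?_⟩
    rw [hv]
    exact b0.ofZLatticeBasis_repr_apply ℝ L ⟨w, hw⟩ i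
  · intro h0
    have := hv (b i)
    simp [h0] at this

theorem spec_aux (N : ℝ → ℕ) (m : ℝ) (hm : 0 < m) (hN : 0 < N m)
    (h0 : ∀ t, 0 < t → t < m → N t = 0) (a b a' b' : ℝ)
    (ha : 0 < a) (hb : 0 < b) (ha' : 0 < a') (hb' : 0 < b') (hab : a ≤ b) (hab' : a' ≤ b')
    (h : ∀ x, N (x / a) + N (x / b) = N (x / a') + N (x / b')) : a = a' ∧ b = b' := by
  have key : ∀ c d : ℝ, 0 < c → c < d → N (c * m / d) = 0 := by
    intro c d hc hcd
    have hd := hc.trans hcd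
    refine h0 _ (by positivity) ?_
    rw [div_lt_iff₀ hd]
    nlinarith
  have self : ∀ c : ℝ, 0 < c → N (c * m / c) = N m := by
    intro c hc
    rw [mul_div_cancel_left₀ _ hc.ne']
  have e : a = a' := by
    rcases lt_trichotomy a a' with hlt | he | hlt
    · have := h (a * m)
      rw [self a ha, key a a' ha hlt, key a b' ha (hlt.trans_le hab')] at this
      omega
    · exact he
    · have := h (a' * m)
      rw [self a' ha', key a' a ha' hlt, key a' b ha' (hlt.trans_le hab)] at this
      omega
  subst e
  refine ⟨rfl, ?_⟩
  rcases lt_trichotomy b b' with hlt | he | hlt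
  · have := h (b * m)
    rw [self b hb, key b b' hb hlt] at this
    omega
  · exact he
  · have := h (b' * m)
    rw [self b' hb', key b' b hb' hlt] at this
    omega

/-- Theorem 3.18 (case `n = 2p`): on a fixed flat torus, `F_{αβ,p}` and `F_{α'β',p}` are
isospectral iff `{α, β} = {α', β'}` as unordered pairs. -/
theorem stmt_9 (p : ℕ) (hp : 1 ≤ p)
    (L : Submodule ℤ (EuclideanSpace ℝ (Fin (2 * p))))
    [DiscreteTopology L] [IsZLattice ℝ L]
    (α α' β β' : ℝ) (hα : 0 < α) (hα' : 0 < α') (hβ : 0 < β) (hβ' : 0 < β') :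
    torusSpec L α β p = torusSpec L α' β' p ↔
      ((α = α' ∧ β = β') ∨ (α = β' ∧ β = α')) := by

  have hch : (2 * p - 1).choose (p - 1) = (2 * p - 1).choose p := by
    rw [← Nat.choose_symm_of_eq_add]; omega
  have hpos : 0 < (2 * p - 1).choose p := Nat.choose_pos (by omega)
  let N : ℝ → ℕ := fun t => Nat.card {l : EuclideanSpace ℝ (Fin (2 * p)) //
        l ∈ dualLattice L ∧ ‖l‖ ^ 2 = t}
  have hS : ∀ a b x : ℝ, 0 < a → 0 < b → torusSpec L a b p x =
      (2 * p - 1).choose p * (N (x / (4 * π ^ 2) / a) + N (x / (4 * π ^ 2) / b)) := by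
    have hc : ∀ a x : ℝ, 0 < a → Nat.card {l : EuclideanSpace ℝ (Fin (2 * p)) //
        l ∈ dualLattice L ∧ 4 * π ^ 2 * a * ‖l‖ ^ 2 = x} = N (x / (4 * π ^ 2) / a) := by
      intro a x ha
      have hpi : (0 : ℝ) < 4 * π ^ 2 := by positivity
      refine Nat.card_congr (Equiv.subtypeEquivRight fun l => and_congr_right fun _ => ?_)
      rw [div_div, eq_div_iff (by positivity), mul_comm]
    intro a b x ha hb
    simp only [torusSpec]
    rw [hc a x ha, hc b x hb, hch, mul_add]
  constructor
  · intro h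
    obtain ⟨v, hv, hv0⟩ := dual_exists (by omega) L
    obtain ⟨w, ⟨⟨hw, hwv⟩, hw0⟩, hmin⟩ := Set.exists_min_image
      ({l | l ∈ dualLattice L ∧ ‖l‖ ≤ ‖v‖} \ {0}) (fun l => ‖l‖)
      ((dual_finite L ‖v‖).subset Set.sdiff_subset) ⟨v, ⟨hv, le_rfl⟩, hv0⟩
    have hwpos : 0 < ‖w‖ := norm_pos_iff.2 hw0
    have hm : 0 < ‖w‖ ^ 2 := by positivity
    have hN : 0 < N (‖w‖ ^ 2) := by
      have hf : Finite {l : EuclideanSpace ℝ (Fin (2 * p)) //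
          l ∈ dualLattice L ∧ ‖l‖ ^ 2 = ‖w‖ ^ 2} := by
        refine ((dual_finite L ‖w‖).subset ?_).to_subtype
        rintro l ⟨hl, hl2⟩
        exact ⟨hl, (pow_le_pow_iff_left₀ (norm_nonneg _) (norm_nonneg _) two_ne_zero).1 hl2.le⟩
      have hne : Nonempty {l : EuclideanSpace ℝ (Fin (2 * p)) //
          l ∈ dualLattice L ∧ ‖l‖ ^ 2 = ‖w‖ ^ 2} := ⟨⟨w, hw, rfl⟩⟩
      exact Nat.card_pos
    have h0 : ∀ t, 0 < t → t < ‖w‖ ^ 2 → N t = 0 := by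
      intro t ht htw
      have : IsEmpty {l : EuclideanSpace ℝ (Fin (2 * p)) //
          l ∈ dualLattice L ∧ ‖l‖ ^ 2 = t} := by
        refine ⟨?_⟩
        rintro ⟨l, hl, rfl⟩
        have hlt : ‖l‖ < ‖w‖ :=
          (pow_lt_pow_iff_left₀ (norm_nonneg _) (norm_nonneg _) two_ne_zero).1 htw
        have hl0 : l ≠ 0 := by
          rintro rfl
          simp at ht
        exact absurd (hmin l ⟨⟨hl, hlt.le.trans hwv⟩, hl0⟩) (not_le.2 hlt)
      exact Nat.card_of_isEmpty
    have hE : ∀ x, N (x / α) + N (x / β) = N (x / α') + N (x / β') := by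
      intro x
      have := congrFun h (x * (4 * π ^ 2))
      rw [hS _ _ _ hα hβ, hS _ _ _ hα' hβ', mul_div_cancel_right₀ _ (by positivity)] at this
      exact Nat.eq_of_mul_eq_mul_left hpos this
    have A := spec_aux N _ hm hN h0
    rcases le_total α β with h1 | h1 <;> rcases le_total α' β' with h2 | h2
    · exact Or.inl (A _ _ _ _ hα hβ hα' hβ' h1 h2 hE)
    · exact Or.inr (A _ _ _ _ hα hβ hβ' hα' h1 h2 fun x => by rw [hE, add_comm])
    · exact Or.inr (A _ _ _ _ hβ hα hα' hβ' h1 h2 fun x => by rw [← hE, add_comm]).symm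
    · exact Or.inl (A _ _ _ _ hβ hα hβ' hα' h1 h2 fun x => by
        rw [add_comm, hE, add_comm]).symm
  · rintro (⟨rfl, rfl⟩ | ⟨rfl, rfl⟩)
    · rfl
    · funext x
      rw [hS _ _ _ hα hβ, hS _ _ _ hβ hα, add_comm]
end

section
/- Let n ≥ 2 and let p be a natural number with 1 ≤ p ≤ n−1 and n ≠ 2p, and let α, α', β, β', r, c > 0 be reals. Then S(n,p,α,β,r) = S(n,p,α',β',c·r) (as functions ℝ → ℕ) if and only if α' = c²α and β' = c²β. -/
open scoped Classical

/-- The spectrum, with multiplicities, of the generalized Hodge-Laplace operator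
`F_{αβ} = α dδ + β δd` on `p`-forms on the round `n`-sphere of radius `r`
(Theorem 4.12 and Proposition 4.15): the eigenvalue `λ(k) = (β/r²)(k+p)(k+n-p-1)` for
`k ≥ 1` occurs with multiplicity `dim V_k^p` and the eigenvalue
`μ(k) = (α/r²)(k+p)(k+n-p+1)` for `k ≥ 0` with multiplicity `dim W_k^p`. -/
noncomputable def sphereSpec (n p : ℕ) (α β r : ℝ) : ℝ → ℕ := fun x =>
  (∑' k : ℕ,
      if 1 ≤ k ∧ (β / r ^ 2) * (((k + p) * (k + n - p - 1) : ℕ) : ℝ) = x then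
        ((n + k - 1).factorial * (n + 2 * k - 1)) /
          (p.factorial * (k - 1).factorial * (n - p - 1).factorial * (n + k - p - 1) * (k + p))
      else 0) +
  (∑' k : ℕ,
      if (α / r ^ 2) * (((k + p) * (k + n - p + 1) : ℕ) : ℝ) = x then
        ((n + k).factorial * (n + 2 * k + 1)) /
          ((p - 1).factorial * k.factorial * (n - p).factorial * (n + k - p + 1) * (k + p))
      else 0)

/-- First-eigenvalue argument: two families of spectra with lowest eigenvalues `b * A`, `a * B`
and distinct lowest multiplicities are determined by their sum. -/
lemma spec_aux_le (v w : ℝ → ℝ → ℕ) (A B : ℝ) (d e : ℕ) (hA : 0 < A) (hB : 0 < B)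
    (hd : 0 < d) (he : 0 < e) (hde : d ≠ e)
    (hv0 : ∀ b x, 0 < b → x < b * A → v b x = 0) (hv : ∀ b, 0 < b → v b (b * A) = d)
    (hw0 : ∀ a x, 0 < a → x < a * B → w a x = 0) (hw : ∀ a, 0 < a → w a (a * B) = e)
    (a a' b b' : ℝ) (ha : 0 < a) (ha' : 0 < a') (hb : 0 < b) (hb' : 0 < b')
    (h : ∀ x, v b x + w a x = v b' x + w a' x) (hle : b ≤ b') : a' = a ∧ b' = b := by
  have hb1 := h (b * A)
  have ha1 := h (a * B)
  have ha1' := h (a' * B)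
  rw [hv b hb] at hb1
  rw [hw a ha] at ha1
  rw [hw a' ha'] at ha1'
  rcases hle.eq_or_lt with rfl | hlt
  · refine ⟨?_, rfl⟩
    rcases lt_trichotomy a a' with h1 | h1 | h1
    · rw [hw0 a' (a * B) ha' (by gcongr)] at ha1; omega
    · exact h1.symm
    · rw [hw0 a (a' * B) ha (by gcongr)] at ha1'; omega
  · exfalso
    have hbA : b * A < b' * A := by gcongr
    rw [hv0 b' _ hb' hbA] at hb1
    rcases lt_trichotomy (b * A) (a' * B) with h1 | h1 | h1
    · rw [hw0 a' _ ha' h1] at hb1; omega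
    · rcases lt_trichotomy a a' with h2 | h2 | h2
      · have h3 : a * B < a' * B := by gcongr
        rw [hw0 a' _ ha' h3, hv0 b' _ hb' (by linarith)] at ha1; omega
      · subst h2; omega
      · have h3 : a' * B < a * B := by gcongr
        rw [h1, hw0 a _ ha h3, hw a' ha'] at hb1; omega
    · rcases lt_trichotomy a a' with h2 | h2 | h2
      · have h3 : a * B < a' * B := by gcongr
        rw [hw0 a' _ ha' h3] at ha1
        rw [hv0 b' _ hb' (by linarith)] at ha1; omega
      · subst h2; omega
      · have h3 : a' * B < a * B := by gcongr
        rw [hw0 a _ ha h3, hv0 b _ hb h1] at ha1'; omega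

/-- The sum part belonging to `V`, as a function of `b = β / r²`. -/
noncomputable def specV (n p : ℕ) (b x : ℝ) : ℕ :=
  ∑' k : ℕ,
      if 1 ≤ k ∧ b * (((k + p) * (k + n - p - 1) : ℕ) : ℝ) = x then
        ((n + k - 1).factorial * (n + 2 * k - 1)) /
          (p.factorial * (k - 1).factorial * (n - p - 1).factorial * (n + k - p - 1) * (k + p))
      else 0

/-- The sum part belonging to `W`, as a function of `a = α / r²`. -/
noncomputable def specW (n p : ℕ) (a x : ℝ) : ℕ :=
  ∑' k : ℕ,
      if a * (((k + p) * (k + n - p + 1) : ℕ) : ℝ) = x then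
        ((n + k).factorial * (n + 2 * k + 1)) /
          ((p - 1).factorial * k.factorial * (n - p).factorial * (n + k - p + 1) * (k + p))
      else 0

lemma specV_zero (p s : ℕ) (b x : ℝ) (hb : 0 < b)
    (hx : x < b * (((1 + p) * (s + 1) : ℕ) : ℝ)) : specV (p + s + 1) p b x = 0 := by
  unfold specV
  refine (tsum_congr fun k => ?_).trans tsum_zero
  rw [if_neg]
  rintro ⟨h1, h2⟩
  have h3 : (1 + p) * (s + 1) ≤ (k + p) * (k + (p + s + 1) - p - 1) :=
    Nat.mul_le_mul (by omega) (by omega)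
  have h4 : (((1 + p) * (s + 1) : ℕ) : ℝ) ≤ (((k + p) * (k + (p + s + 1) - p - 1) : ℕ) : ℝ) :=
    Nat.cast_le.mpr h3
  have := mul_le_mul_of_nonneg_left h4 hb.le
  linarith

lemma specW_zero (p s : ℕ) (a x : ℝ) (ha : 0 < a)
    (hx : x < a * ((p * (s + 2) : ℕ) : ℝ)) : specW (p + s + 1) p a x = 0 := by
  unfold specW
  refine (tsum_congr fun k => ?_).trans tsum_zero
  rw [if_neg]
  intro h2
  have h3 : p * (s + 2) ≤ (k + p) * (k + (p + s + 1) - p + 1) :=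
    Nat.mul_le_mul (by omega) (by omega)
  have h4 : ((p * (s + 2) : ℕ) : ℝ) ≤ (((k + p) * (k + (p + s + 1) - p + 1) : ℕ) : ℝ) :=
    Nat.cast_le.mpr h3
  have := mul_le_mul_of_nonneg_left h4 ha.le
  linarith

lemma specV_first (p s : ℕ) (b : ℝ) (hb : 0 < b) :
    specV (p + s + 1) p b (b * (((1 + p) * (s + 1) : ℕ) : ℝ)) = (p + s + 2).choose (p + 1) := by
  unfold specV
  rw [tsum_eq_single 1]
  · have e1 : 1 + (p + s + 1) - p - 1 = s + 1 := by omega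
    have e2 : p + s + 1 + 1 - p - 1 = s + 1 := by omega
    have e3 : p + s + 1 - p - 1 = s := by omega
    have e4 : p + s + 1 + 1 - 1 = p + s + 1 := by omega
    have e5 : p + s + 1 + 2 * 1 - 1 = p + s + 2 := by omega
    rw [e1, if_pos ⟨le_refl 1, rfl⟩, e2, e3, e4, e5, Nat.choose_eq_factorial_div_factorial (by omega)]
    have e6 : p + s + 2 - (p + 1) = s + 1 := by omega
    rw [e6]
    congr 1
    · rw [Nat.factorial_succ (p + s + 1)]; ring
    · rw [Nat.factorial_succ p, Nat.factorial_succ s]; simp; ring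
  · intro k hk
    rw [if_neg]
    rintro ⟨h1, h2⟩
    have h3 := mul_left_cancel₀ hb.ne' h2
    have h4 : (k + p) * (k + (p + s + 1) - p - 1) = (1 + p) * (s + 1) := by exact_mod_cast h3
    have h5 : (1 + p) * (s + 1) < (k + p) * (k + (p + s + 1) - p - 1) :=
      Nat.mul_lt_mul'' (by omega) (by omega)
    omega

lemma specW_first (p s : ℕ) (hp : 1 ≤ p) (a : ℝ) (ha : 0 < a) :
    specW (p + s + 1) p a (a * ((p * (s + 2) : ℕ) : ℝ)) = (p + s + 2).choose p := by
  unfold specW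
  rw [tsum_eq_single 0]
  · have e1 : 0 + (p + s + 1) - p + 1 = s + 2 := by omega
    have e2 : p + s + 1 + 0 - p + 1 = s + 2 := by omega
    have e3 : p + s + 1 - p = s + 1 := by omega
    have e4 : p + s + 1 + 2 * 0 + 1 = p + s + 2 := by omega
    rw [e1, zero_add, if_pos rfl, e2, e3, e4, Nat.choose_eq_factorial_div_factorial (by omega)]
    have e6 : p + s + 2 - p = s + 2 := by omega
    rw [e6]
    congr 1
    · rw [Nat.factorial_succ (p + s + 1)]; ring
    · obtain ⟨m, rfl⟩ : ∃ m, p = m + 1 := ⟨p - 1, by omega⟩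
      rw [Nat.factorial_succ m, Nat.factorial_succ (s + 1)]; simp; ring
  · intro k hk
    rw [if_neg]
    intro h2
    have h3 := mul_left_cancel₀ ha.ne' h2
    have h4 : (k + p) * (k + (p + s + 1) - p + 1) = p * (s + 2) := by exact_mod_cast h3
    have h5 : p * (s + 2) < (k + p) * (k + (p + s + 1) - p + 1) :=
      Nat.mul_lt_mul'' (by omega) (by omega)
    omega

lemma choose_ne (p s : ℕ) (h : s + 1 ≠ p) :
    (p + s + 2).choose (p + 1) ≠ (p + s + 2).choose p := by
  intro h1
  have h2 := Nat.choose_succ_right_eq (p + s + 2) p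
  rw [h1] at h2
  have h3 := Nat.eq_of_mul_eq_mul_left (Nat.choose_pos (by omega)) h2
  omega

/-- Satz 4.23 (case `n ≠ 2p`): `F_{αβ,p}` on the sphere of radius `r` and `F_{α'β',p}` on
the sphere of radius `cr` are isospectral iff `(α', β') = (c²α, c²β)`. -/
theorem stmt_18 (n p : ℕ) (hn : 2 ≤ n) (hp : 1 ≤ p) (hpn : p ≤ n - 1) (hn2p : n ≠ 2 * p)
    (α α' β β' r c : ℝ) (hα : 0 < α) (hα' : 0 < α') (hβ : 0 < β) (hβ' : 0 < β')
    (hr : 0 < r) (hc : 0 < c) :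
    sphereSpec n p α β r = sphereSpec n p α' β' (c * r) ↔
      α' = c ^ 2 * α ∧ β' = c ^ 2 * β := by
  have hc0 := hc.ne'
  have hr0 := hr.ne'
  constructor
  · intro h
    obtain ⟨s, rfl⟩ : ∃ s, n = p + s + 1 := ⟨n - p - 1, by omega⟩
    have hS : ∀ x, specV (p + s + 1) p (β / r ^ 2) x + specW (p + s + 1) p (α / r ^ 2) x
        = specV (p + s + 1) p (β' / (c * r) ^ 2) x
          + specW (p + s + 1) p (α' / (c * r) ^ 2) x := fun x => congrFun h x
    have key := spec_aux_le (specV (p + s + 1) p) (specW (p + s + 1) p)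
      (((1 + p) * (s + 1) : ℕ) : ℝ) ((p * (s + 2) : ℕ) : ℝ) _ _
      (by positivity) (by positivity) (Nat.choose_pos (by omega)) (Nat.choose_pos (by omega))
      (choose_ne p s (by omega))
      (specV_zero p s) (specV_first p s) (specW_zero p s) (specW_first p s hp)
    have hfin : α' / (c * r) ^ 2 = α / r ^ 2 ∧ β' / (c * r) ^ 2 = β / r ^ 2 := by
      rcases le_total (β / r ^ 2) (β' / (c * r) ^ 2) with hle | hle
      · exact key _ _ _ _ (by positivity) (by positivity) (by positivity) (by positivity) hS hle
      · have := key _ _ _ _ (by positivity) (by positivity) (by positivity) (by positivity)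
          (fun x => (hS x).symm) hle
        exact ⟨this.1.symm, this.2.symm⟩
    obtain ⟨h1, h2⟩ := hfin
    rw [div_eq_div_iff (by positivity) (by positivity)] at h1 h2
    have hr2 : r ^ 2 ≠ 0 := by positivity
    exact ⟨mul_right_cancel₀ hr2 (by linarith), mul_right_cancel₀ hr2 (by linarith)⟩
  · rintro ⟨rfl, rfl⟩
    have e : ∀ t : ℝ, c ^ 2 * t / (c * r) ^ 2 = t / r ^ 2 := by intro t; field_simp
    unfold sphereSpec
    rw [e, e]
end
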